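/- Let $1<\alpha,\beta<\infty$ and $0<p\leqslant q<\infty$ with $q\geqslant 2$ and $\beta p\leqslant\alpha q$. Suppose $C>0$ is a constant such that for all positive integers $m,n$ and every complex polynomial $P\in\mathbb{C}[z_1,\dots,z_n]$ of degree $m$ one has $\|P\|_{A_\beta^q(\mathbb{D}^n)}\leqslant C^m\|P\|_{A_\alpha^p(\mathbb{D}^n)}$. Then $C\geqslant\sqrt{\alpha q/(\beta p)}$. -/

import Mathlib

open MeasureTheory Metric

/-- The weighted Bergman measure `dA_α(z) = (α-1)(1-|z|²)^(α-2) dA(z)` on the unit disk,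
where `dA = dx dy / π` is the normalized area measure. -/
noncomputable def bergmanMeasure (α : ℝ) : Measure ℂ :=
  ((volume : Measure ℂ).restrict (ball (0 : ℂ) 1)).withDensity
    fun z => ENNReal.ofReal ((α - 1) * (1 - ‖z‖ ^ 2) ^ (α - 2) / Real.pi)

/-- The product Bergman measure `dA_α(z₁) ⋯ dA_α(zₙ)` on the polydisc. -/
noncomputable def bergmanMeasurePi (n : ℕ) (α : ℝ) : Measure (Fin n → ℂ) :=
  Measure.pi fun _ => bergmanMeasure α

/-!
The constant is forced by the test polynomials `(z₁ + ⋯ + zₙ) ^ m`. Let `μ` be a rotation invariant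
probability measure on `ℂ` with second moment `σ`. As `n → ∞`, the sum `z₁ + ⋯ + zₙ`, divided by
`√n`, behaves like a complex Gaussian: its absolute moment of order `2k` tends to `k! σ ^ k`.
Rotation invariance kills the mixed moments, which gives a recursion in `n` for the moments of the
sum, and the limit follows by the Stolz–Cesàro theorem.

Taking `m`-th roots, letting `n → ∞`, and comparing the exponents `mq` and `mp` with nearby even
integers `2l ≤ mq` and `mp ≤ 2k`, the inequality becomes `(l!) ^ (1/l) / β ≤ C² (k!) ^ (1/k) / α`.
By Stirling's formula `(k!) ^ (1/k)` is asymptotic to `k / e`, so dividing by `m` and letting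
`m → ∞` leaves `q / β ≤ C² p / α`.
-/

open Filter Finset ProbabilityTheory
open scoped Asymptotics ComplexConjugate ENNReal Nat Topology

/-! ### Limits: Stirling and Stolz–Cesàro -/

theorem tendsto_factorial_rpow_one_div_div :
    Tendsto (fun n : ℕ => (n ! : ℝ) ^ (1 / (n : ℝ)) / n) atTop (𝓝 (Real.exp 1)⁻¹) := by
  have hstirling :
      Tendsto (fun n : ℕ => Stirling.stirlingSeq n ^ (1 / (n : ℝ))) atTop (𝓝 1) := by
    simpa using Stirling.tendsto_stirlingSeq_sqrt_pi.rpow tendsto_one_div_atTop_nhds_zero_nat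
      (.inl (by positivity))
  have hsqrt : Tendsto (fun n : ℕ => √(2 * n) ^ (1 / (n : ℝ))) atTop (𝓝 1) := by
    have h2n : Tendsto (fun n : ℕ => (2 * n : ℝ) ^ (1 / (2 * n : ℝ))) atTop (𝓝 1) :=
      tendsto_rpow_div.comp (tendsto_natCast_atTop_atTop.const_mul_atTop two_pos)
    refine h2n.congr fun n => ?_
    rw [Real.sqrt_eq_rpow, ← Real.rpow_mul (by positivity), one_div_mul_one_div]
  have hlim := (hstirling.mul hsqrt).mul_const (Real.exp 1)⁻¹
  rw [one_mul, one_mul] at hlim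
  refine hlim.congr' ?_
  filter_upwards [eventually_ne_atTop 0] with n hn
  have hstirling_nonneg : 0 ≤ Stirling.stirlingSeq n := by
    rw [Stirling.stirlingSeq]
    positivity
  have hfactorial : (n ! : ℝ) = Stirling.stirlingSeq n * √(2 * n) * (n / Real.exp 1) ^ n := by
    rw [Stirling.stirlingSeq]
    field_simp
  have hroot : (n ! : ℝ) ^ (1 / (n : ℝ)) = Stirling.stirlingSeq n ^ (1 / (n : ℝ)) *
      √(2 * n) ^ (1 / (n : ℝ)) * (n / Real.exp 1) := by
    rw [hfactorial, Real.mul_rpow (by positivity) (by positivity),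
      Real.mul_rpow hstirling_nonneg (by positivity), one_div,
      Real.pow_rpow_inv_natCast (by positivity) hn]
  rw [hroot]
  field_simp

theorem tendsto_factorial_rpow_one_div_div_of_tendsto {k : ℕ → ℕ} {c : ℝ}
    (hk : Tendsto k atTop atTop) (hkc : Tendsto (fun m : ℕ => (k m : ℝ) / m) atTop (𝓝 c)) :
    Tendsto (fun m : ℕ => ((k m)! : ℝ) ^ (1 / (k m : ℝ)) / m) atTop
      (𝓝 ((Real.exp 1)⁻¹ * c)) := by
  refine ((tendsto_factorial_rpow_one_div_div.comp hk).mul hkc).congr' ?_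
  filter_upwards [hk.eventually_ne_atTop 0] with m hm
  simp only [Function.comp_apply]
  field_simp

theorem tendsto_div_of_tendsto_sub_div_sub {u v : ℕ → ℝ} {c : ℝ} (hv : StrictMono v)
    (hv_atTop : Tendsto v atTop atTop)
    (huv : Tendsto (fun n => (u (n + 1) - u n) / (v (n + 1) - v n)) atTop (𝓝 c)) :
    Tendsto (fun n => u n / v n) atTop (𝓝 c) := by
  have hv_step (n : ℕ) : 0 < v (n + 1) - v n := sub_pos.2 (hv n.lt_succ_self)
  have hstep : (fun n => (u (n + 1) - u n) - c * (v (n + 1) - v n)) =o[atTop]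
      fun n => v (n + 1) - v n := by
    refine (Asymptotics.isLittleO_iff_tendsto fun n hn => absurd hn (hv_step n).ne').2 ?_
    refine (sub_self c ▸ huv.sub_const c).congr fun n => ?_
    rw [sub_div (_ - _), mul_div_cancel_right₀ _ (hv_step n).ne']
  have hsum_v (n : ℕ) : ∑ i ∈ range n, (v (i + 1) - v i) = v n - v 0 := sum_range_sub v n
  have hsum_diff (n : ℕ) : ∑ i ∈ range n, ((u (i + 1) - u i) - c * (v (i + 1) - v i)) =
      (u n - u 0) - c * (v n - v 0) := by
    rw [sum_sub_distrib, ← mul_sum, sum_range_sub, sum_range_sub]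
  have hsum := hstep.sum_range (fun n => (hv_step n).le) (by
    simpa only [hsum_v, sub_eq_add_neg (v _) (v 0)]
      using tendsto_atTop_add_const_right atTop (-v 0) hv_atTop)
  simp only [hsum_v, hsum_diff] at hsum
  have hconst (b : ℝ) : (fun _ => b) =o[atTop] v :=
    Asymptotics.isLittleO_const_left.2 (.inr (tendsto_norm_atTop_atTop.comp hv_atTop))
  have hlittleO : (fun n => u n - c * v n) =o[atTop] v := by
    refine ((hsum.trans_isBigO
      ((Asymptotics.isBigO_refl v atTop).sub (hconst (v 0)).isBigO)).add
      (hconst (u 0 - c * v 0))).congr_left fun n => ?_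
    ring
  refine (zero_add c ▸ hlittleO.tendsto_div_nhds_zero.add_const c).congr' ?_
  filter_upwards [hv_atTop.eventually_ne_atTop 0] with n hn
  field_simp
  ring

theorem tendsto_div_pow_succ_of_tendsto_sub_div_pow {u : ℕ → ℝ} {c : ℝ} {k : ℕ}
    (hu : Tendsto (fun n => (u (n + 1) - u n) / (n : ℝ) ^ k) atTop (𝓝 c)) :
    Tendsto (fun n => u n / (n : ℝ) ^ (k + 1)) atTop (𝓝 (c / (k + 1))) := by
  have hpow : Tendsto (fun n : ℕ => (((n + 1 : ℕ) : ℝ) ^ (k + 1) - (n : ℝ) ^ (k + 1)) / n ^ k)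
      atTop (𝓝 (k + 1)) := by
    have hderiv := (hasDerivAt_pow (k + 1) (1 : ℝ)).tendsto_slope_zero_right.comp
      (tendsto_inv_atTop_nhdsGT_zero.comp tendsto_natCast_atTop_atTop)
    rw [one_pow, one_pow, mul_one, Nat.cast_succ] at hderiv
    refine hderiv.congr' ?_
    filter_upwards [eventually_ne_atTop 0] with n hn
    simp only [Function.comp_apply, smul_eq_mul]
    have hadd : 1 + (n : ℝ)⁻¹ = (n + 1) / n := by field_simp
    rw [hadd, inv_inv, div_pow, Nat.cast_succ]
    field_simp
    ring
  refine tendsto_div_of_tendsto_sub_div_sub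
    (v := fun n => (n : ℝ) ^ (k + 1))
    (fun m n hmn => pow_lt_pow_left₀ (by exact_mod_cast hmn) (by positivity) k.succ_ne_zero)
    ((tendsto_pow_atTop k.succ_ne_zero).comp tendsto_natCast_atTop_atTop) ?_
  refine (hu.div hpow (by positivity)).congr' ?_
  filter_upwards [eventually_ne_atTop 0] with n hn
  exact div_div_div_cancel_right₀ (by positivity) _ _

section LpNorm

variable {X E : Type*} [MeasurableSpace X] [NormedAddCommGroup E] {μ : Measure X} {f : X → E}

theorem lpNorm_le_lpNorm_of_exponent_le [IsProbabilityMeasure μ] {p q : ℝ≥0∞} (hpq : p ≤ q)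
    (hf : MemLp f q μ) : lpNorm f p μ ≤ lpNorm f q μ := by
  rw [← toReal_eLpNorm hf.1, ← toReal_eLpNorm hf.1]
  exact ENNReal.toReal_mono hf.eLpNorm_ne_top (eLpNorm_le_eLpNorm_of_exponent_le hpq hf.1)

theorem integral_norm_pow_rpow_rpow_one_div (hf : AEStronglyMeasurable f μ) {m : ℕ} (hm : m ≠ 0)
    {q : ℝ} (hq : 0 < q) :
    (∫ x, (‖f x‖ ^ m) ^ q ∂μ) ^ (1 / q) = lpNorm f (ENNReal.ofReal (m * q)) μ ^ m := by
  have hmq : 0 < m * q := by positivity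
  rw [lpNorm_eq_integral_norm_rpow_toReal (ENNReal.ofReal_pos.2 hmq).ne' ENNReal.ofReal_ne_top hf,
    ENNReal.toReal_ofReal hmq.le, ← Real.rpow_mul_natCast (by positivity)]
  simp_rw [← Real.rpow_natCast_mul (norm_nonneg _)]
  congr 1
  field_simp

end LpNorm

/-! ### Sums of independent copies of a rotation invariant measure -/

section RotationInvariant

variable {μ : Measure ℂ}

theorem integral_pow_mul_conj_pow_of_ne [SMulInvariantMeasure Circle ℂ μ]
    {i j : ℕ} (hij : i ≠ j) : ∫ z, z ^ i * conj z ^ j ∂μ = 0 := by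
  have hsub : (i : ℂ) - j ≠ 0 := sub_ne_zero.2 (by exact_mod_cast hij)
  -- `c` is chosen so that `c ^ (i - j) = -1`.
  let c : Circle := Circle.exp (Real.pi / ((i : ℝ) - j))
  have hc : (c : ℂ) ^ i * conj (c : ℂ) ^ j = -1 := by
    rw [← Circle.coe_inv_eq_conj, ← Circle.exp_neg, Circle.coe_exp, Circle.coe_exp,
      ← Complex.exp_nat_mul, ← Complex.exp_nat_mul, ← Complex.exp_add, ← Complex.exp_pi_mul_I]
    congr 1
    push_cast
    field_simp
    ring
  have hrotate (z : ℂ) : (c • z) ^ i * conj (c • z) ^ j = -(z ^ i * conj z ^ j) := by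
    rw [Circle.smul_def, smul_eq_mul, map_mul, mul_pow, mul_pow]
    linear_combination (z ^ i * conj z ^ j) * hc
  have hinv := integral_smul_eq_self (μ := μ) (fun z : ℂ => z ^ i * conj z ^ j) (g := c)
  simp only [hrotate, integral_neg] at hinv
  exact self_eq_neg.1 hinv.symm

theorem ofReal_norm_pow_two_mul (z : ℂ) (k : ℕ) :
    ((‖z‖ ^ (2 * k) : ℝ) : ℂ) = z ^ k * conj z ^ k := by
  rw [← mul_pow, Complex.mul_conj', pow_mul]
  norm_cast

theorem integral_norm_add_pow [IsFiniteMeasure μ] [SMulInvariantMeasure Circle ℂ μ]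
    (hμ : ∀ p : ℝ≥0∞, p ≠ ∞ → MemLp id p μ) (w : ℂ) (k : ℕ) :
    ∫ z, ‖z + w‖ ^ (2 * k) ∂μ =
      ∑ j ∈ range (k + 1), (k.choose j : ℝ) ^ 2 * ‖w‖ ^ (2 * (k - j)) * ∫ z, ‖z‖ ^ (2 * j) ∂μ := by
  have hexpand (z : ℂ) : ((‖z + w‖ ^ (2 * k) : ℝ) : ℂ) =
      ∑ i ∈ range (k + 1), ∑ j ∈ range (k + 1),
        (k.choose i * k.choose j * w ^ (k - i) * conj w ^ (k - j)) * (z ^ i * conj z ^ j) := by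
    rw [ofReal_norm_pow_two_mul, map_add, add_pow, add_pow, sum_mul_sum]
    refine sum_congr rfl fun i _ => sum_congr rfl fun j _ => ?_
    ring
  have hint (a : ℂ) (i j : ℕ) : Integrable (fun z : ℂ => a * (z ^ i * conj z ^ j)) μ := by
    refine .const_mul ?_ a
    have hnorm := (hμ (i + j : ℕ) (ENNReal.natCast_ne_top _)).integrable_norm_pow'
    refine hnorm.mono' (by fun_prop) (.of_forall fun z => ?_)
    simp [pow_add]
  apply Complex.ofReal_injective
  rw [← integral_complex_ofReal, Complex.ofReal_sum]
  simp_rw [hexpand]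
  rw [integral_finsetSum _ fun i _ => integrable_finsetSum _ fun j _ => hint _ _ _]
  refine sum_congr rfl fun i hi => ?_
  rw [integral_finsetSum _ fun j _ => hint _ _ _, sum_eq_single_of_mem i hi fun j _ hj => by
    rw [integral_const_mul, integral_pow_mul_conj_pow_of_ne hj.symm, mul_zero]]
  simp_rw [integral_const_mul, ← ofReal_norm_pow_two_mul, integral_complex_ofReal]
  rw [Complex.ofReal_mul, Complex.ofReal_mul, ofReal_norm_pow_two_mul]
  push_cast
  ring

theorem memLp_sum_eval [IsProbabilityMeasure μ] {p : ℝ≥0∞} (hμ : MemLp id p μ) (n : ℕ) :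
    MemLp (fun z : Fin n → ℂ => ∑ i, z i) p (Measure.pi fun _ => μ) :=
  memLp_finsetSum _ fun i _ => hμ.comp_measurePreserving (measurePreserving_eval _ i)

theorem integrable_norm_sum_pow [IsProbabilityMeasure μ]
    (hμ : ∀ p : ℝ≥0∞, p ≠ ∞ → MemLp id p μ) (n k : ℕ) :
    Integrable (fun z : Fin n → ℂ => ‖∑ i, z i‖ ^ k) (Measure.pi fun _ => μ) :=
  (memLp_sum_eval (hμ k (ENNReal.natCast_ne_top k)) n).integrable_norm_pow'

theorem integral_norm_sum_pow_succ [IsProbabilityMeasure μ] [SMulInvariantMeasure Circle ℂ μ]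
    (hμ : ∀ p : ℝ≥0∞, p ≠ ∞ → MemLp id p μ) (n k : ℕ) :
    ∫ z : Fin (n + 1) → ℂ, ‖∑ i, z i‖ ^ (2 * k) ∂Measure.pi (fun _ => μ) =
      ∑ j ∈ range (k + 1), (k.choose j : ℝ) ^ 2 *
        (∫ z : Fin n → ℂ, ‖∑ i, z i‖ ^ (2 * (k - j)) ∂Measure.pi fun _ => μ) *
        ∫ z, ‖z‖ ^ (2 * j) ∂μ := by
  have hsplit := (measurePreserving_piFinSuccAbove (fun _ : Fin (n + 1) => μ) 0).symm
  have hint := (hsplit.integrable_comp_emb (MeasurableEquiv.measurableEmbedding _)).2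
    (integrable_norm_sum_pow hμ (n + 1) (2 * k))
  simp only [Function.comp_def] at hint
  rw [← hsplit.integral_comp', integral_prod_symm _ hint]
  simp only [MeasurableEquiv.piFinSuccAbove_symm_apply, Fin.insertNthEquiv_apply,
    Fin.insertNth_zero', Fin.sum_univ_succ, Fin.cons_zero, Fin.cons_succ, integral_norm_add_pow hμ]
  rw [integral_finsetSum _ fun j _ => ((integrable_norm_sum_pow hμ n _).const_mul _).mul_const _]
  simp_rw [integral_mul_const, integral_const_mul]

theorem tendsto_integral_norm_sum_pow_div_pow [IsProbabilityMeasure μ]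
    [SMulInvariantMeasure Circle ℂ μ] (hμ : ∀ p : ℝ≥0∞, p ≠ ∞ → MemLp id p μ) (k : ℕ) :
    Tendsto (fun n : ℕ =>
        (∫ z : Fin n → ℂ, ‖∑ i, z i‖ ^ (2 * k) ∂Measure.pi fun _ => μ) / (n : ℝ) ^ k)
      atTop (𝓝 (k ! * (∫ z, ‖z‖ ^ 2 ∂μ) ^ k)) := by
  induction k using Nat.strong_induction_on with
  | _ k ih =>
  obtain _ | k := k
  · simp
  let M (l n : ℕ) : ℝ := ∫ z : Fin n → ℂ, ‖∑ i, z i‖ ^ (2 * l) ∂Measure.pi fun _ => μ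
  let c (j : ℕ) : ℝ := ((k + 1).choose (j + 1) : ℝ) ^ 2 * ∫ z, ‖z‖ ^ (2 * (j + 1)) ∂μ
  have hdiff (n : ℕ) : M (k + 1) (n + 1) - M (k + 1) n =
      ∑ j ∈ range (k + 1), c j * M (k - j) n := by
    simp only [M, c, integral_norm_sum_pow_succ hμ, sum_range_succ' _ (k + 1)]
    simp [mul_right_comm]
  have hterm (j : ℕ) (hj : j ∈ range (k + 1)) :
      Tendsto (fun n : ℕ => c j * M (k - j) n / (n : ℝ) ^ k) atTop
        (𝓝 (c j * ((k - j)! * (∫ z, ‖z‖ ^ 2 ∂μ) ^ (k - j)) * 0 ^ j)) := by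
    refine (((ih (k - j) (by omega)).const_mul (c j)).mul
      ((tendsto_inv_atTop_nhds_zero_nat (𝕜 := ℝ)).pow j)).congr fun n => ?_
    rw [← pow_sub_mul_pow (n : ℝ) (Nat.lt_succ_iff.1 (mem_range.1 hj)), inv_pow,
      ← mul_div_assoc, ← div_eq_mul_inv, div_div]
  have hlim := tendsto_div_pow_succ_of_tendsto_sub_div_pow (u := M (k + 1))
    ((tendsto_finsetSum _ hterm).congr fun n => by rw [hdiff, sum_div])
  convert hlim using 2
  -- Only the second moment of `μ` survives division by `n ^ k`.
  rw [sum_eq_single_of_mem 0 (by simp) fun j _ hj => by rw [zero_pow hj, mul_zero]]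
  rw [Nat.factorial_succ]
  simp only [Nat.cast_mul, Nat.cast_add, Nat.cast_one, zero_add, Nat.choose_one_right, mul_one,
    tsub_zero, pow_zero, c]
  field_simp
  ring

/-- The `L^p` norm of the test function `z ↦ z₁ + ⋯ + zₙ` on `ℂⁿ` with the product measure `μⁿ`.
The exponent is a real number, as in the Nikolskii inequality, and the norm takes the junk value
`0` unless the sum is in `L^p`. -/
noncomputable def sumLpNorm (μ : Measure ℂ) (n : ℕ) (p : ℝ) : ℝ :=
  lpNorm (fun z : Fin n → ℂ => ∑ i, z i) (ENNReal.ofReal p) (Measure.pi fun _ => μ)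

theorem sumLpNorm_nonneg (μ : Measure ℂ) (n : ℕ) (p : ℝ) : 0 ≤ sumLpNorm μ n p :=
  lpNorm_nonneg

theorem sumLpNorm_mono [IsProbabilityMeasure μ] (hμ : ∀ p : ℝ≥0∞, p ≠ ∞ → MemLp id p μ)
    (n : ℕ) : Monotone (sumLpNorm μ n) := fun _ _ hst =>
  lpNorm_le_lpNorm_of_exponent_le (ENNReal.ofReal_le_ofReal hst)
    (memLp_sum_eval (hμ _ ENNReal.ofReal_ne_top) n)

theorem integral_norm_sum_pow_rpow_rpow_one_div {m : ℕ} (hm : m ≠ 0)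
    {p : ℝ} (hp : 0 < p) (n : ℕ) :
    (∫ z : Fin n → ℂ, (‖∑ i, z i‖ ^ m) ^ p ∂Measure.pi fun _ => μ) ^ (1 / p) =
      sumLpNorm μ n (m * p) ^ m :=
  integral_norm_pow_rpow_rpow_one_div (by fun_prop) hm hp

theorem tendsto_sumLpNorm_sq_div [IsProbabilityMeasure μ] [SMulInvariantMeasure Circle ℂ μ]
    (hμ : ∀ p : ℝ≥0∞, p ≠ ∞ → MemLp id p μ) {k : ℕ} (hk : k ≠ 0) :
    Tendsto (fun n : ℕ => sumLpNorm μ n (2 * k) ^ 2 / n) atTop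
      (𝓝 ((k ! : ℝ) ^ (1 / (k : ℝ)) * ∫ z, ‖z‖ ^ 2 ∂μ)) := by
  have hk_inv : 0 ≤ 1 / (k : ℝ) := by positivity
  have hlim := (tendsto_integral_norm_sum_pow_div_pow hμ k).rpow_const (.inr hk_inv)
  rw [Real.mul_rpow (by positivity) (by positivity), one_div,
    Real.pow_rpow_inv_natCast (by positivity) hk, ← one_div] at hlim
  refine hlim.congr fun n => ?_
  have hnorm := integral_norm_sum_pow_rpow_rpow_one_div (μ := μ) two_ne_zero
    (p := k) (by positivity) n
  rw [Nat.cast_ofNat] at hnorm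
  rw [← hnorm, Real.div_rpow (by positivity) (by positivity), one_div,
    Real.pow_rpow_inv_natCast (by positivity) hk]
  simp_rw [Real.rpow_natCast, pow_mul]

section Comparison

variable {ν : Measure ℂ} [IsProbabilityMeasure μ] [IsProbabilityMeasure ν]
  [SMulInvariantMeasure Circle ℂ μ] [SMulInvariantMeasure Circle ℂ ν]

theorem factorial_rpow_mul_le_of_sumLpNorm_le
    (hμ : ∀ p : ℝ≥0∞, p ≠ ∞ → MemLp id p μ) (hν : ∀ p : ℝ≥0∞, p ≠ ∞ → MemLp id p ν)
    {s t C : ℝ} {l k : ℕ} (hl : l ≠ 0) (hk : k ≠ 0) (hls : 2 * l ≤ s) (htk : t ≤ 2 * k)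
    (hC : 0 ≤ C) (H : ∀ n : ℕ, 0 < n → sumLpNorm μ n s ≤ C * sumLpNorm ν n t) :
    (l ! : ℝ) ^ (1 / (l : ℝ)) * ∫ z, ‖z‖ ^ 2 ∂μ ≤
      C ^ 2 * ((k ! : ℝ) ^ (1 / (k : ℝ)) * ∫ z, ‖z‖ ^ 2 ∂ν) := by
  refine le_of_tendsto_of_tendsto (tendsto_sumLpNorm_sq_div hμ hl)
    ((tendsto_sumLpNorm_sq_div hν hk).const_mul (C ^ 2)) ?_
  filter_upwards [eventually_gt_atTop 0] with n hn
  have hnorm : sumLpNorm μ n (2 * l) ≤ C * sumLpNorm ν n (2 * k) :=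
    calc sumLpNorm μ n (2 * l) ≤ sumLpNorm μ n s := sumLpNorm_mono hμ n hls
      _ ≤ C * sumLpNorm ν n t := H n hn
      _ ≤ C * sumLpNorm ν n (2 * k) := mul_le_mul_of_nonneg_left (sumLpNorm_mono hν n htk) hC
  rw [← mul_div_assoc, ← mul_pow]
  exact div_le_div_of_nonneg_right (pow_le_pow_left₀ (sumLpNorm_nonneg μ n _) hnorm 2)
    n.cast_nonneg

theorem integral_norm_sq_mul_le_of_sumLpNorm_le
    (hμ : ∀ p : ℝ≥0∞, p ≠ ∞ → MemLp id p μ) (hν : ∀ p : ℝ≥0∞, p ≠ ∞ → MemLp id p ν)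
    {p q C : ℝ} (hp : 0 < p) (hq : 0 < q) (hC : 0 ≤ C)
    (H : ∀ m n : ℕ, 0 < m → 0 < n → sumLpNorm μ n (m * q) ≤ C * sumLpNorm ν n (m * p)) :
    (∫ z, ‖z‖ ^ 2 ∂μ) * q ≤ C ^ 2 * ((∫ z, ‖z‖ ^ 2 ∂ν) * p) := by
  let l (m : ℕ) : ℕ := ⌊q / 2 * m⌋₊
  let k (m : ℕ) : ℕ := ⌈p / 2 * m⌉₊
  have hl : Tendsto l atTop atTop := tendsto_nat_floor_atTop.comp
    (tendsto_natCast_atTop_atTop.const_mul_atTop (by positivity))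
  have hk : Tendsto k atTop atTop := tendsto_nat_ceil_atTop.comp
    (tendsto_natCast_atTop_atTop.const_mul_atTop (by positivity))
  have hlq : Tendsto (fun m => (l m : ℝ) / m) atTop (𝓝 (q / 2)) :=
    (tendsto_nat_floor_mul_div_atTop (by positivity)).comp tendsto_natCast_atTop_atTop
  have hkp : Tendsto (fun m => (k m : ℝ) / m) atTop (𝓝 (p / 2)) :=
    (tendsto_nat_ceil_mul_div_atTop (by positivity)).comp tendsto_natCast_atTop_atTop
  have hlim := le_of_tendsto_of_tendsto
    ((tendsto_factorial_rpow_one_div_div_of_tendsto hl hlq).mul_const (∫ z, ‖z‖ ^ 2 ∂μ))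
    (((tendsto_factorial_rpow_one_div_div_of_tendsto hk hkp).mul_const
      (∫ z, ‖z‖ ^ 2 ∂ν)).const_mul (C ^ 2)) (by
    filter_upwards [eventually_gt_atTop 0, hl.eventually_ne_atTop 0, hk.eventually_ne_atTop 0]
      with m hm hlm hkm
    have hlm_le : (l m : ℝ) ≤ q / 2 * m := Nat.floor_le (by positivity)
    have hkm_ge : p / 2 * m ≤ k m := Nat.le_ceil _
    rw [div_mul_eq_mul_div, div_mul_eq_mul_div, ← mul_div_assoc]
    exact div_le_div_of_nonneg_right (factorial_rpow_mul_le_of_sumLpNorm_le hμ hν hlm hkm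
      (by linarith) (by linarith) hC fun n hn => H m n hm hn) m.cast_nonneg)
  field_simp at hlim
  linarith

end Comparison

end RotationInvariant

/-! ### The Bergman measure -/

theorem map_withDensity_comp {X Y : Type*} [MeasurableSpace X] [MeasurableSpace Y] (μ : Measure X)
    {g : X → Y} (hg : Measurable g) {f : Y → ℝ≥0∞} (hf : Measurable f) :
    (μ.withDensity (f ∘ g)).map g = (μ.map g).withDensity f := by
  ext s hs
  rw [Measure.map_apply hg hs, withDensity_apply _ (hg hs), withDensity_apply _ hs,
    setLIntegral_map hs hf hg]
  rfl

theorem smulInvariantMeasure_withDensity {G X : Type*} [Group G] [MulAction G X]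
    [MeasurableSpace X] [MeasurableConstSMul G X] (μ : Measure X)
    [SMulInvariantMeasure G X μ] {f : X → ℝ≥0∞} (hf : ∀ (g : G) (x : X), f (g • x) = f x) :
    SMulInvariantMeasure G X (μ.withDensity f) where
  measure_preimage_smul g s hs := by
    rw [withDensity_apply _ hs, withDensity_apply _ (measurable_const_smul g hs),
      ← (measurePreserving_smul g μ).setLIntegral_comp_preimage_emb
        (measurableEmbedding_const_smul g) f s]
    simp_rw [hf]

instance smulInvariantMeasure_circle_volume :
    SMulInvariantMeasure Circle ℂ (volume : Measure ℂ) where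
  measure_preimage_smul c _ hs :=
    (rotation c).measurePreserving.measure_preimage hs.nullMeasurableSet

theorem map_norm_sq_volume :
    (volume : Measure ℂ).map (fun z => ‖z‖ ^ 2) =
      NNReal.pi • (volume : Measure ℝ).restrict (Set.Ioi 0) := by
  rw [Measure.restrict_congr_set Ioi_ae_eq_Ici]
  refine (Measure.ext_of_Ico _ _ fun a b hab => ?_).symm
  have hpreimage : (fun z : ℂ => ‖z‖ ^ 2) ⁻¹' Set.Ico a b = ball 0 √b \ ball 0 √a := by
    ext z
    simp [Real.lt_sqrt, and_comm]
  have hofReal_sqrt (t : ℝ) : ENNReal.ofReal √t ^ 2 = ENNReal.ofReal t := by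
    rw [← ENNReal.ofReal_pow t.sqrt_nonneg, Real.sq_sqrt', ENNReal.ofReal_max]
    simp
  have hIco : Set.Ico a b ∩ Set.Ici 0 = Set.Ico (max a 0) b := by
    ext t
    simp
  rw [Measure.map_apply (by fun_prop) measurableSet_Ico, hpreimage,
    measure_sdiff (ball_subset_ball (Real.sqrt_le_sqrt hab.le)) measurableSet_ball.nullMeasurableSet
      measure_ball_lt_top.ne, Complex.volume_ball, Complex.volume_ball, hofReal_sqrt, hofReal_sqrt,
    Measure.smul_apply, Measure.restrict_apply measurableSet_Ico, hIco, Real.volume_Ico,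
    ENNReal.ofReal_sub _ (le_max_right _ _), ENNReal.ofReal_max, ENNReal.ofReal_zero,
    max_eq_left zero_le, ← ENNReal.sub_mul fun _ _ => ENNReal.coe_ne_top, mul_comm]
  rfl

theorem mul_betaPDFReal {a b : ℝ} (ha : 0 < a) (hb : 0 < b) (x : ℝ) :
    betaPDFReal a b x * x = a / (a + b) * betaPDFReal (a + 1) b x := by
  have hbeta : beta (a + 1) b = a / (a + b) * beta a b := by
    have hGamma := Real.Gamma_add_one (add_pos ha hb).ne'
    rw [beta, beta, Real.Gamma_add_one ha.ne', add_right_comm, hGamma]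
    field_simp
  have := beta_pos ha hb
  rw [betaPDFReal, betaPDFReal]
  split_ifs with hx
  · rw [hbeta, add_sub_cancel_right, Real.rpow_sub_one hx.1.ne']
    have := hx.1
    field_simp
  · simp

theorem betaPDFReal_nonneg {a b : ℝ} (ha : 0 < a) (hb : 0 < b) (x : ℝ) :
    0 ≤ betaPDFReal a b x := by
  by_cases hx : 0 < x ∧ x < 1
  · exact (betaPDFReal_pos hx.1 hx.2 ha hb).le
  · rw [betaPDFReal, if_neg hx]

theorem integral_betaMeasure {E : Type*} [NormedAddCommGroup E] [NormedSpace ℝ E] {a b : ℝ}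
    (ha : 0 < a) (hb : 0 < b) (f : ℝ → E) :
    ∫ x, f x ∂betaMeasure a b = ∫ x, betaPDFReal a b x • f x := by
  have hmeas : Measurable (betaPDF a b) := (measurable_betaPDFReal a b).ennreal_ofReal
  rw [betaMeasure, integral_withDensity_eq_integral_toReal_smul hmeas
    (.of_forall fun _ => ENNReal.ofReal_lt_top)]
  simp_rw [betaPDF, ENNReal.toReal_ofReal (betaPDFReal_nonneg ha hb _)]

theorem integral_betaPDFReal {a b : ℝ} (ha : 0 < a) (hb : 0 < b) :
    ∫ x, betaPDFReal a b x = 1 := by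
  have := isProbabilityMeasureBeta ha hb
  simpa using (integral_betaMeasure ha hb fun _ => (1 : ℝ)).symm

theorem integral_id_betaMeasure {a b : ℝ} (ha : 0 < a) (hb : 0 < b) :
    ∫ x, x ∂betaMeasure a b = a / (a + b) := by
  simp_rw [integral_betaMeasure ha hb, smul_eq_mul, mul_betaPDFReal ha hb]
  rw [integral_const_mul, integral_betaPDFReal (by positivity) hb, mul_one]

theorem betaMeasure_one_left {b : ℝ} (hb : 0 < b) :
    betaMeasure 1 b = ((volume : Measure ℝ).restrict (Set.Ioo 0 1)).withDensity
      fun x => ENNReal.ofReal (b * (1 - x) ^ (b - 1)) := by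
  have hbeta : beta 1 b = b⁻¹ := by
    have := Real.Gamma_pos_of_pos hb
    rw [beta, Real.Gamma_one, one_mul, add_comm, Real.Gamma_add_one hb.ne']
    field_simp
  rw [betaMeasure, ← withDensity_indicator measurableSet_Ioo]
  congr with x
  simp [betaPDF_eq, hbeta, Set.indicator, apply_ite ENNReal.ofReal]

theorem map_norm_sq_bergmanMeasure {α : ℝ} (hα : 1 < α) :
    (bergmanMeasure α).map (fun z => ‖z‖ ^ 2) = betaMeasure 1 (α - 1) := by
  let f (t : ℝ) : ℝ≥0∞ := ENNReal.ofReal ((α - 1) * (1 - t) ^ (α - 2) / Real.pi)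
  have hf : Measurable f := by fun_prop
  have hball : ball (0 : ℂ) 1 = (fun z => ‖z‖ ^ 2) ⁻¹' Set.Iio 1 := by
    ext z
    simp [sq_lt_one_iff_abs_lt_one]
  have hpi (t : ℝ) : (NNReal.pi : ℝ≥0∞) * f t =
      ENNReal.ofReal ((α - 1) * (1 - t) ^ (α - 1 - 1)) := by
    rw [← ENNReal.ofReal_coe_nnreal, ← ENNReal.ofReal_mul (by positivity), NNReal.coe_real_pi,
      mul_div_cancel₀ _ Real.pi_ne_zero, sub_sub, one_add_one_eq_two]
  calc (bergmanMeasure α).map (fun z => ‖z‖ ^ 2)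
      = (((volume : Measure ℂ).map fun z => ‖z‖ ^ 2).restrict (Set.Iio 1)).withDensity f := by
        rw [Measure.restrict_map (by fun_prop) measurableSet_Iio,
          ← map_withDensity_comp _ (by fun_prop) (by fun_prop), ← hball]
        rfl
    _ = (volume.restrict (Set.Ioo 0 1)).withDensity ((NNReal.pi : ℝ≥0∞) • f) := by
        rw [map_norm_sq_volume, Measure.restrict_smul,
          Measure.restrict_restrict measurableSet_Iio, Set.Iio_inter_Ioi, withDensity_smul _ hf]
        exact withDensity_smul_measure _ _
    _ = betaMeasure 1 (α - 1) := by
        rw [betaMeasure_one_left (sub_pos.2 hα)]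
        exact congrArg _ (funext hpi)

theorem isProbabilityMeasure_bergmanMeasure {α : ℝ} (hα : 1 < α) :
    IsProbabilityMeasure (bergmanMeasure α) := by
  have hbeta := isProbabilityMeasureBeta one_pos (sub_pos.2 hα)
  rw [← map_norm_sq_bergmanMeasure hα] at hbeta
  exact Measure.isProbabilityMeasure_of_map fun z => ‖z‖ ^ 2

theorem integral_norm_sq_bergmanMeasure {α : ℝ} (hα : 1 < α) :
    ∫ z, ‖z‖ ^ 2 ∂bergmanMeasure α = α⁻¹ := by
  rw [← integral_map (f := fun t : ℝ => t) (by fun_prop) (by fun_prop),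
    map_norm_sq_bergmanMeasure hα]
  exact (integral_id_betaMeasure one_pos (sub_pos.2 hα)).trans (by rw [add_sub_cancel, one_div])

theorem memLp_id_bergmanMeasure {α : ℝ} (hα : 1 < α) (p : ℝ≥0∞) :
    MemLp id p (bergmanMeasure α) := by
  have := isProbabilityMeasure_bergmanMeasure hα
  refine .of_bound (by fun_prop) 1 ((withDensity_absolutelyContinuous _ _).ae_le ?_)
  filter_upwards [ae_restrict_mem measurableSet_ball] with z hz
  exact (mem_ball_zero_iff.1 hz).le

instance smulInvariantMeasure_bergmanMeasure (α : ℝ) :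
    SMulInvariantMeasure Circle ℂ (bergmanMeasure α) := by
  rw [bergmanMeasure, ← withDensity_indicator measurableSet_ball]
  refine smulInvariantMeasure_withDensity volume fun c z => ?_
  simp only [Set.indicator, mem_ball_zero_iff, norm_smul, Circle.norm_coe, one_mul,
    Circle.smul_def]

theorem totalDegree_sum_X_pow {σ R : Type*} [Fintype σ] [Nonempty σ] [CommSemiring R]
    [NoZeroDivisors R] [Nontrivial R] (m : ℕ) :
    ((∑ i, MvPolynomial.X i : MvPolynomial σ R) ^ m).totalDegree = m := by
  classical
  have hhom : ((∑ i, MvPolynomial.X i : MvPolynomial σ R) ^ m).IsHomogeneous (1 * m) :=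
    (MvPolynomial.IsHomogeneous.sum _ _ _ fun i _ => MvPolynomial.isHomogeneous_X _ i).pow m
  have hsum_ne : (∑ i, MvPolynomial.X i : MvPolynomial σ R) ≠ 0 := fun hzero => by
    obtain ⟨i⟩ := ‹Nonempty σ›
    simpa using congrArg (MvPolynomial.eval (Pi.single i 1)) hzero
  rw [hhom.totalDegree (pow_ne_zero m hsum_ne), one_mul]

theorem nikolskii_bergman_sharp_general (α β p q : ℝ) (hα : 1 < α) (hβ : 1 < β) (hp : 0 < p)
    (hq : 0 < q) (C : ℝ) (hC : 0 ≤ C)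
    (H : ∀ m n : ℕ, 0 < m → 0 < n → ∀ P : MvPolynomial (Fin n) ℂ,
      P.totalDegree = m →
      (∫ z, ‖MvPolynomial.eval z P‖ ^ q ∂(bergmanMeasurePi n β)) ^ (1 / q) ≤
        C ^ m * (∫ z, ‖MvPolynomial.eval z P‖ ^ p ∂(bergmanMeasurePi n α)) ^ (1 / p)) :
    Real.sqrt (α * q / (β * p)) ≤ C := by
  have := isProbabilityMeasure_bergmanMeasure hα
  have := isProbabilityMeasure_bergmanMeasure hβ
  have hsum (m n : ℕ) (hm : 0 < m) (hn : 0 < n) :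
      sumLpNorm (bergmanMeasure β) n (m * q) ≤ C * sumLpNorm (bergmanMeasure α) n (m * p) := by
    have : Nonempty (Fin n) := ⟨0, hn⟩
    have hP := H m n hm hn _ (totalDegree_sum_X_pow m)
    simp only [bergmanMeasurePi, map_pow, map_sum, MvPolynomial.eval_X, norm_pow] at hP
    rw [integral_norm_sum_pow_rpow_rpow_one_div hm.ne' hq,
      integral_norm_sum_pow_rpow_rpow_one_div hm.ne' hp, ← mul_pow] at hP
    exact le_of_pow_le_pow_left₀ hm.ne' (mul_nonneg hC (sumLpNorm_nonneg _ _ _)) hP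
  have hmoment := integral_norm_sq_mul_le_of_sumLpNorm_le
    (fun r _ => memLp_id_bergmanMeasure hβ r) (fun r _ => memLp_id_bergmanMeasure hα r)
    hp hq hC hsum
  rw [integral_norm_sq_bergmanMeasure hα, integral_norm_sq_bergmanMeasure hβ] at hmoment
  refine Real.sqrt_le_iff.2 ⟨hC, (div_le_iff₀ (by positivity)).2 ?_⟩
  field_simp at hmoment
  linarith

/-- Sharpness of the constant in Theorem 1.3: if `C > 0` satisfies
`‖P‖_{A_β^q(𝔻ⁿ)} ≤ C^m ‖P‖_{A_α^p(𝔻ⁿ)}` for all positive integers `m, n` and all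
complex polynomials `P` in `n` variables of degree `m`, then `C ≥ √(αq/(βp))`. -/
theorem nikolskii_bergman_sharp
    (α β p q : ℝ) (hα : 1 < α) (hβ : 1 < β) (hp : 0 < p) (hpq : p ≤ q)
    (hq2 : 2 ≤ q) (hβpαq : β * p ≤ α * q)
    (C : ℝ) (hC : 0 < C)
    (H : ∀ m n : ℕ, 0 < m → 0 < n → ∀ P : MvPolynomial (Fin n) ℂ,
      P.totalDegree = m →
      (∫ z, ‖MvPolynomial.eval z P‖ ^ q ∂(bergmanMeasurePi n β)) ^ (1 / q) ≤
        C ^ m * (∫ z, ‖MvPolynomial.eval z P‖ ^ p ∂(bergmanMeasurePi n α)) ^ (1 / p)) :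
    Real.sqrt (α * q / (β * p)) ≤ C :=
  nikolskii_bergman_sharp_general α β p q hα hβ hp (hp.trans_le hpq) C hC.le H
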